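/- Let k ≥ 2 and let G be a bipartite graph. The non-matching complex NM_k(G) has vanishing reduced homology (over any field) in all dimensions d ≥ 2k - 2. -/

import Mathlib

attribute [local instance] Classical.propDecidable

variable {W : Type} [LinearOrder W] (F : Type) [Field F]

/-- The simplicial boundary operator on formal `F`-linear combinations of finite sets
(faces `s` of cardinality `n` being generators in degree `n`; the empty face is the
generator of the augmentation degree, so this computes *reduced* homology). -/
noncomputable def bdry (x : Finset W →₀ F) : Finset W →₀ F :=
  x.sum fun s a =>
    ∑ v ∈ s, (a * (-1 : F) ^ (s.filter fun w => w < v).card) • Finsupp.single (s.erase v) (1 : F)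

/-- The reduced homology (with coefficients in `F`) of the complex `K` vanishes in
dimension `d`: every reduced `d`-cycle of `K` is a boundary of a `(d+1)`-chain of `K`.
(A face of dimension `d` has cardinality `d + 1`.) -/
def VanishesAt (K : Finset (Finset W)) (d : ℕ) : Prop :=
  ∀ x : Finset W →₀ F, (∀ s ∈ x.support, s ∈ K ∧ s.card = d + 1) → bdry F x = 0 →
    ∃ y : Finset W →₀ F, (∀ s ∈ y.support, s ∈ K ∧ s.card = d + 2) ∧ bdry F y = x

/-- The link of a face `σ` in the complex `K`. -/
noncomputable def linkOf (K : Finset (Finset W)) (σ : Finset W) : Finset (Finset W) :=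
  K.filter fun τ => Disjoint τ σ ∧ τ ∪ σ ∈ K

/-- A matching: a finite set of non-loop edges that are pairwise vertex-disjoint. -/
def IsMatching {V : Type} (M : Finset (Sym2 V)) : Prop :=
  (∀ e ∈ M, ¬ e.IsDiag) ∧ ∀ e ∈ M, ∀ f ∈ M, e ≠ f → ∀ v, v ∈ e → v ∉ f

/-- The matching number of a finite edge set. -/
noncomputable def nu {V : Type} (E : Finset (Sym2 V)) : ℕ :=
  (E.powerset.filter fun M => IsMatching M).sup Finset.card

/-- The non-matching complex `NM_k(G)` of the graph with edge set `E`: the family of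
edge subsets whose matching number is `< k`. -/
noncomputable def NM {V : Type} (k : ℕ) (E : Finset (Sym2 V)) : Finset (Finset (Sym2 V)) :=
  E.powerset.filter fun σ => nu σ < k


section LP

def LPFeas {J U : Type} [Fintype J] (M : J → U → ℝ) (c : U → ℝ) (A : Set J) (y : J → ℝ) : Prop :=
  (∀ j, 0 ≤ y j) ∧ (∀ j, j ∉ A → y j = 0) ∧ ∑ j, y j • M j = c

def LPOpt {J U : Type} [Fintype J] (M : J → U → ℝ) (c : U → ℝ) (w : J → ℝ) (A : Set J)
    (y : J → ℝ) : Prop :=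
  LPFeas M c A y ∧ ∀ y', LPFeas M c A y' → ∑ j, w j * y' j ≤ ∑ j, w j * y j

def LPNondeg {J U : Type} [Fintype J] (M : J → U → ℝ) (w : J → ℝ) : Prop :=
  ∀ S : Set J, (∃ d : J → ℝ, d ≠ 0 ∧ (∀ j, j ∉ S → d j = 0) ∧ ∑ j, d j • M j = 0) →
    ∃ d : J → ℝ, (∀ j, j ∉ S → d j = 0) ∧ ∑ j, d j • M j = 0 ∧ ∑ j, w j * d j ≠ 0

def LPGen {J U : Type} (M : J → U → ℝ) (c : U → ℝ) : Prop :=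
  ∀ S : Set J, c ∈ Submodule.span ℝ (M '' S) → Submodule.span ℝ (M '' S) = ⊤

lemma lp_small_step {J : Type} [Fintype J] (y d : J → ℝ) (hy : ∀ j, 0 ≤ y j)
    (hd : ∀ j, y j = 0 → 0 ≤ d j) : ∃ t : ℝ, 0 < t ∧ ∀ j, 0 ≤ y j + t * d j := by
  have h : ∀ j, ∀ᶠ t in nhdsWithin (0 : ℝ) (Set.Ioi 0), 0 ≤ y j + t * d j := by
    intro j
    rcases (hy j).eq_or_lt with h0 | h0
    · filter_upwards [self_mem_nhdsWithin] with t ht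
      rw [← h0, zero_add]
      exact mul_nonneg (le_of_lt ht) (hd j h0.symm)
    · have hc : Filter.Tendsto (fun t : ℝ => y j + t * d j) (nhdsWithin 0 (Set.Ioi 0))
          (nhds (y j + 0 * d j)) := by
        apply Filter.Tendsto.mono_left _ nhdsWithin_le_nhds
        exact (Continuous.tendsto (by fun_prop) 0)
      have : 0 < y j + 0 * d j := by simpa using h0
      filter_upwards [hc.eventually (lt_mem_nhds this)] with t ht using ht.le
  have h2 := (Filter.eventually_all.2 h).and self_mem_nhdsWithin
  obtain ⟨t, h1, h2⟩ := h2.exists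
  exact ⟨t, h2, h1⟩

variable {J U : Type} [Fintype J] {M : J → U → ℝ} {c : U → ℝ} {w : J → ℝ}

lemma lp_step {A : Set J} {y d : J → ℝ} (hy : LPOpt M c w A y)
    (hdA : ∀ j, j ∉ A → d j = 0) (hdM : ∑ j, d j • M j = 0) (hd : ∀ j, y j = 0 → 0 ≤ d j) :
    ∑ j, w j * d j ≤ 0 := by
  obtain ⟨t, ht, h⟩ := lp_small_step y d hy.1.1 hd
  have hf : LPFeas M c A (fun j => y j + t * d j) := by
    refine ⟨h, ?_, ?_⟩
    · intro j hj
      simp [hdA j hj, hy.1.2.1 j hj]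
    · simp only [add_smul, mul_smul, Finset.sum_add_distrib]
      rw [← Finset.smul_sum, hdM, hy.1.2.2]; simp
  have h3 := hy.2 _ hf
  have h4 : ∑ j, w j * (y j + t * d j) = ∑ j, w j * y j + t * ∑ j, w j * d j := by
    rw [Finset.mul_sum, ← Finset.sum_add_distrib]
    exact Finset.sum_congr rfl fun j _ => by ring
  rw [h4] at h3
  by_contra hc
  push Not at hc
  have := mul_pos ht hc
  linarith

/-- The support of an optimum is independent. -/
lemma lp_indep (hN : LPNondeg M w) {A : Set J} {y : J → ℝ} (hy : LPOpt M c w A y)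
    {d : J → ℝ} (hdy : ∀ j, y j = 0 → d j = 0) (hdM : ∑ j, d j • M j = 0) : d = 0 := by
  by_contra hne
  obtain ⟨d', h1, h2, h3⟩ := hN {j | y j ≠ 0} ⟨d, hne, fun j hj => hdy j (by simpa using hj), hdM⟩
  have h1' : ∀ j, y j = 0 → d' j = 0 := fun j hj => h1 j (by simpa using hj)
  have hA : ∀ j, j ∉ A → d' j = 0 := fun j hj => h1' j (hy.1.2.1 j hj)
  have e1 := lp_step hy hA h2 (fun j hj => (h1' j hj).ge)
  have e2 := lp_step (d := fun j => - d' j) hy (fun j hj => by simp [hA j hj])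
    (by simp [h2]) (fun j hj => by simp [h1' j hj])
  simp only [mul_neg, Finset.sum_neg_distrib] at e2
  exact h3 (le_antisymm e1 (by linarith))

lemma lp_unique (hN : LPNondeg M w) {A : Set J} {y y' : J → ℝ} (hy : LPOpt M c w A y)
    (hy' : LPOpt M c w A y') : y = y' := by
  have hv : ∑ j, w j * y j = ∑ j, w j * y' j := le_antisymm (hy'.2 _ hy.1) (hy.2 _ hy'.1)
  have hm : LPOpt M c w A (fun j => (1/2) * y j + (1/2) * y' j) := by
    refine ⟨⟨?_, ?_, ?_⟩, ?_⟩
    · intro j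
      have := hy.1.1 j
      have := hy'.1.1 j
      positivity
    · intro j hj
      simp [hy.1.2.1 j hj, hy'.1.2.1 j hj]
    · simp only [add_smul, mul_smul, Finset.sum_add_distrib]
      rw [← Finset.smul_sum, ← Finset.smul_sum, hy.1.2.2, hy'.1.2.2, ← add_smul]
      norm_num
    · intro z hz
      have e : ∑ j, w j * ((1/2) * y j + (1/2) * y' j)
          = (1/2) * ∑ j, w j * y j + (1/2) * ∑ j, w j * y' j := by
        rw [Finset.mul_sum, Finset.mul_sum, ← Finset.sum_add_distrib]
        exact Finset.sum_congr rfl fun j _ => by ring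
      rw [e]
      have := hy.2 z hz
      linarith
  have h0 : (fun j => y j - y' j) = 0 := by
    apply lp_indep hN hm
    · intro j hj
      have h1 := hy.1.1 j
      have h2 := hy'.1.1 j
      have : y j = 0 := by linarith
      have : y' j = 0 := by linarith
      linarith
    · simp [sub_smul, Finset.sum_sub_distrib, hy.1.2.2, hy'.1.2.2]
  funext j
  have := congrFun h0 j
  simp only [Pi.zero_apply] at this
  linarith

lemma lp_union (hN : LPNondeg M w) (hG : LPGen M c) {A B : Set J} {y : J → ℝ}
    (hA : LPOpt M c w A y) (hB : LPOpt M c w B y) : LPOpt M c w (A ∪ B) y := by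
  classical
  refine ⟨⟨hA.1.1, fun j hj => hA.1.2.1 j (fun h => hj (Or.inl h)), hA.1.2.2⟩, ?_⟩
  intro z hz
  set S : Set J := {j | y j ≠ 0} with hS
  have hspan : Submodule.span ℝ (M '' S) = ⊤ := by
    apply hG
    rw [← hA.1.2.2]
    apply Submodule.sum_mem
    intro j _
    by_cases hj : y j = 0
    · simp [hj]
    · exact Submodule.smul_mem _ _ (Submodule.subset_span ⟨j, hj, rfl⟩)
  have hd : ∀ i : J, ∃ d : J → ℝ, (∀ j, y j = 0 → d j = 0) ∧ ∑ j, d j • M j = M i := by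
    intro i
    have hi : M i ∈ Submodule.span ℝ (M '' S) := by rw [hspan]; trivial
    rw [Finsupp.mem_span_image_iff_linearCombination] at hi
    obtain ⟨l, hl, hl2⟩ := hi
    refine ⟨l, ?_, ?_⟩
    · intro j hj
      by_contra hne
      exact (hl (Finsupp.mem_support_iff.2 hne)) hj
    · rw [← hl2, Finsupp.linearCombination_apply, Finsupp.sum_fintype]
      simp
  choose D hD1 hD2 using hd
  have key : ∀ i, z i ≠ 0 → w i - ∑ j, w j * D i j ≤ 0 ∨ y i ≠ 0 := by
    intro i hi
    by_cases hyi : y i = 0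
    · left
      have hi' : i ∈ A ∪ B := by
        by_contra h
        exact hi (hz.2.1 i h)
      have gen : ∀ C : Set J, i ∈ C → LPOpt M c w C y → w i - ∑ j, w j * D i j ≤ 0 := by
        intro C hiC hC
        have := lp_step (d := fun j => (if j = i then 1 else 0) - D i j) hC ?_ ?_ ?_
        · simpa [mul_sub, Finset.sum_sub_distrib] using this
        · intro j hj
          have hji : j ≠ i := by rintro rfl; exact hj hiC
          simp [hji, hD1 i j (hC.1.2.1 j hj)]
        · simp [sub_smul, Finset.sum_sub_distrib, hD2]
        · intro j hj
          rw [hD1 i j hj]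
          split_ifs <;> norm_num
      rcases hi' with h | h
      · exact gen A h hA
      · exact gen B h hB
    · exact Or.inr hyi
  -- coefficient outside the support
  let q : J → ℝ := fun i => if y i = 0 then z i else 0
  have hr : (fun j => z j - y j - (q j - ∑ i, q i * D i j)) = 0 := by
    apply lp_indep hN hA
    · intro j hj
      have : ∑ i, q i * D i j = 0 := Finset.sum_eq_zero fun i _ => by simp [hD1 i j hj]
      rw [this]
      simp [q, hj]
    · simp only [sub_smul, Finset.sum_sub_distrib, hz.2.2, hA.1.2.2, Finset.sum_smul, mul_smul]
      rw [Finset.sum_comm]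
      simp only [← Finset.smul_sum, hD2]
      simp
  have hr' : ∀ j, z j = y j + (q j - ∑ i, q i * D i j) := by
    intro j
    have := congrFun hr j
    simp only [Pi.zero_apply] at this
    linarith
  have e : ∑ j, w j * z j = ∑ j, w j * y j + ∑ i, q i * (w i - ∑ j, w j * D i j) := by
    calc ∑ j, w j * z j = ∑ j, (w j * y j + w j * q j - ∑ i, q i * (w j * D i j)) := by
          refine Finset.sum_congr rfl fun j _ => ?_
          rw [hr' j, mul_add, mul_sub, Finset.mul_sum, add_sub_assoc]
          congr 2
          exact Finset.sum_congr rfl fun i _ => by ring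
      _ = _ := by
          rw [Finset.sum_sub_distrib, Finset.sum_add_distrib, Finset.sum_comm]
          simp only [mul_sub, Finset.sum_sub_distrib, ← Finset.mul_sum]
          have : ∑ j, w j * q j = ∑ j, q j * w j := Finset.sum_congr rfl fun j _ => mul_comm _ _
          rw [this]; ring
  rw [e]
  have : ∑ i, q i * (w i - ∑ j, w j * D i j) ≤ 0 := by
    apply Finset.sum_nonpos
    intro i _
    by_cases hyi : y i = 0
    · by_cases hzi : z i = 0
      · simp [q, hyi, hzi]
      · rcases key i hzi with h | h
        · simp only [q, hyi, if_true]
          exact mul_nonpos_of_nonneg_of_nonpos (hz.1 i) h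
        · exact absurd hyi h
    · simp [q, hyi]
  linarith

lemma lp_exists [Fintype U] {A : Set J} (hne : ∃ y, LPFeas M c A y)
    (hbd : ∃ B : ℝ, ∀ y, LPFeas M c A y → ∀ j, y j ≤ B) : ∃ y, LPOpt M c w A y := by
  obtain ⟨B, hB⟩ := hbd
  have hcl : IsClosed {y : J → ℝ | LPFeas M c A y} := by
    have : {y : J → ℝ | LPFeas M c A y} =
        (⋂ j, {y | 0 ≤ y j}) ∩ ((⋂ j, ⋂ (_ : j ∉ A), {y | y j = 0}) ∩
          {y | ∑ j, y j • M j = c}) := by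
      ext y
      simp [LPFeas]
    rw [this]
    refine IsClosed.inter (isClosed_iInter fun j => isClosed_le (by fun_prop) (by fun_prop))
      (IsClosed.inter (isClosed_iInter fun j => isClosed_iInter fun _ =>
        isClosed_eq (by fun_prop) (by fun_prop)) (isClosed_eq (by fun_prop) (by fun_prop)))
  have hcpt : IsCompact {y : J → ℝ | LPFeas M c A y} := by
    apply IsCompact.of_isClosed_subset (isCompact_Icc (a := (0 : J → ℝ)) (b := fun _ => B)) hcl
    intro y hy
    exact ⟨fun j => hy.1 j, fun j => hB y hy j⟩
  obtain ⟨y, hy, hmax⟩ := hcpt.exists_isMaxOn hne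
    (f := fun y : J → ℝ => ∑ j, w j * y j) (by fun_prop)
  exact ⟨y, hy, fun y' hy' => hmax hy'⟩

/-- A generic point in a box. -/
lemma exists_generic {ι κ : Type} [Fintype ι] [Finite κ] (P : κ → Submodule ℝ (ι → ℝ))
    (hP : ∀ i, P i ≠ ⊤) (r : ℝ) (hr : 1 < r) :
    ∃ x : ι → ℝ, (∀ i, 1 ≤ x i ∧ x i ≤ r) ∧ ∀ i, x ∉ P i := by
  by_contra hcon
  push Not at hcon
  have hsub : Set.Icc (fun _ : ι => (1 : ℝ)) (fun _ => r) ⊆ ⋃ i, (P i : Set (ι → ℝ)) := by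
    intro x hx
    obtain ⟨i, hi⟩ := hcon x (fun i => ⟨hx.1 i, hx.2 i⟩)
    exact Set.mem_iUnion.2 ⟨i, hi⟩
  have h0 : MeasureTheory.volume (⋃ i, (P i : Set (ι → ℝ))) = 0 := by
    rw [MeasureTheory.measure_iUnion_null_iff]
    intro i
    exact MeasureTheory.Measure.addHaar_submodule _ _ (hP i)
  have h1 := MeasureTheory.measure_mono_null hsub h0
  rw [Real.volume_Icc_pi] at h1
  simp only [Finset.prod_const] at h1
  have h2 : ENNReal.ofReal (r - 1) ≠ 0 := by
    simp; linarith
  exact pow_ne_zero _ h2 h1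

end LP

section Hom

/-- The sign of a vertex in a face. -/
noncomputable def fsgn (s : Finset W) (v : W) : F :=
  (-1 : F) ^ (s.filter fun w => w < v).card

noncomputable def bdryL : (Finset W →₀ F) →ₗ[F] (Finset W →₀ F) :=
  Finsupp.linearCombination F (fun s : Finset W =>
    ∑ v ∈ s, fsgn F s v • Finsupp.single (s.erase v) (1 : F))

lemma bdry_eq (x : Finset W →₀ F) : bdry F x = bdryL F x := by
  unfold bdry bdryL
  rw [Finsupp.linearCombination_apply]
  refine Finsupp.sum_congr fun s _ => ?_
  rw [Finset.smul_sum]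
  refine Finset.sum_congr rfl fun v _ => ?_
  rw [smul_smul]; rfl

lemma fsgn_mul_self (s : Finset W) (v : W) : fsgn F s v * fsgn F s v = 1 := by
  unfold fsgn
  rw [← mul_pow]; simp

lemma fsgn_ne_zero (s : Finset W) (v : W) : fsgn F s v ≠ 0 := by
  intro h
  have := fsgn_mul_self F s v
  rw [h] at this
  simp at this

lemma fsgn_swap_aux (s : Finset W) {u v : W} (hu : u ∈ s) (huv : u < v) :
    fsgn F s v * fsgn F (s.erase v) u + fsgn F s u * fsgn F (s.erase u) v = 0 := by
  have h1 : fsgn F (s.erase v) u = fsgn F s u := by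
    unfold fsgn
    congr 2
    ext w
    simp only [Finset.mem_filter, Finset.mem_erase]
    constructor
    · rintro ⟨⟨_, h⟩, h2⟩; exact ⟨h, h2⟩
    · rintro ⟨h, h2⟩; exact ⟨⟨fun h3 => absurd (h3 ▸ h2) (not_lt.2 huv.le), h⟩, h2⟩
  have h2 : fsgn F s v = - fsgn F (s.erase u) v := by
    unfold fsgn
    have : (s.filter fun w => w < v).card = ((s.erase u).filter fun w => w < v).card + 1 := by
      rw [Finset.filter_erase, Finset.card_erase_add_one]
      simp [hu, huv]
    rw [this, pow_succ]; ring
  rw [h1, h2]; ring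

lemma fsgn_swap (s : Finset W) {u v : W} (hu : u ∈ s) (hv : v ∈ s) (huv : u ≠ v) :
    fsgn F s v * fsgn F (s.erase v) u + fsgn F s u * fsgn F (s.erase u) v = 0 := by
  rcases lt_or_gt_of_ne huv with h | h
  · exact fsgn_swap_aux F s hu h
  · rw [add_comm]; exact fsgn_swap_aux F s hv h

lemma bdryL_single (s : Finset W) (a : F) : bdryL F (Finsupp.single s a) =
    a • ∑ v ∈ s, fsgn F s v • Finsupp.single (s.erase v) (1 : F) := by
  simp [bdryL]

lemma bdryL_bdryL (x : Finset W →₀ F) : bdryL F (bdryL F x) = 0 := by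
  have : (bdryL F).comp (bdryL F) = (0 : (Finset W →₀ F) →ₗ[F] (Finset W →₀ F)) := by
    apply Finsupp.lhom_ext
    intro s a
    rw [LinearMap.comp_apply, bdryL_single, map_smul, map_sum]
    simp only [map_smul, bdryL_single, one_smul, LinearMap.zero_apply]
    have : ∑ v ∈ s, fsgn F s v • ∑ u ∈ s.erase v, fsgn F (s.erase v) u •
        Finsupp.single ((s.erase v).erase u) (1 : F) = 0 := by
      simp only [Finset.smul_sum, smul_smul]
      rw [Finset.sum_sigma']
      apply Finset.sum_involution (fun p _ => (⟨p.2, p.1⟩ : Σ _ : W, W))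
      · rintro ⟨v, u⟩ h
        simp only [Finset.mem_sigma, Finset.mem_erase] at h
        rw [Finset.erase_right_comm (a := u) (b := v), ← add_smul,
          fsgn_swap F s h.2.2 h.1 h.2.1, zero_smul]
      · rintro ⟨v, u⟩ h _ heq
        simp only [Finset.mem_sigma, Finset.mem_erase] at h
        simp only [Sigma.mk.injEq] at heq
        exact h.2.1 heq.1
      · rintro ⟨v, u⟩ h
        simp only [Finset.mem_sigma, Finset.mem_erase] at h ⊢
        exact ⟨h.2.2, fun h3 => h.2.1 h3.symm, h.1⟩
      · rintro ⟨v, u⟩ h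
        rfl
    rw [this, smul_zero]
  exact LinearMap.congr_fun this x

lemma bdryL_apply (x : Finset W →₀ F) (t : Finset W) : bdryL F x t =
    ∑ s ∈ x.support, ∑ v ∈ s, if s.erase v = t then x s * fsgn F s v else 0 := by
  unfold bdryL
  rw [Finsupp.linearCombination_apply, Finsupp.sum, Finsupp.finsetSum_apply]
  refine Finset.sum_congr rfl fun s _ => ?_
  rw [Finsupp.smul_apply, Finsupp.finsetSum_apply, Finset.smul_sum]
  refine Finset.sum_congr rfl fun v _ => ?_
  rw [Finsupp.smul_apply, Finsupp.single_apply]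
  split_ifs <;> simp

lemma mem_support_bdryL {x : Finset W →₀ F} {t : Finset W} (h : bdryL F x t ≠ 0) :
    ∃ s, x s ≠ 0 ∧ ∃ v ∈ s, s.erase v = t := by
  rw [bdryL_apply] at h
  obtain ⟨s, hs, h⟩ := Finset.exists_ne_zero_of_sum_ne_zero h
  obtain ⟨v, hv, h⟩ := Finset.exists_ne_zero_of_sum_ne_zero h
  refine ⟨s, Finsupp.mem_support_iff.1 hs, v, hv, ?_⟩
  by_contra hc
  simp [hc] at h

lemma bdryL_coeff {x : Finset W →₀ F} {r : Finset W} {e : W} (her : e ∈ r)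
    (h : ∀ s, x s ≠ 0 → ∀ v ∈ s, s.erase v = r.erase e → v = e) :
    bdryL F x (r.erase e) = x r * fsgn F r e := by
  rw [bdryL_apply]
  have h1 : ∀ s ∈ x.support, s ≠ r →
      (∑ v ∈ s, if s.erase v = r.erase e then x s * fsgn F s v else 0) = 0 := by
    intro s hs hne
    apply Finset.sum_eq_zero
    intro v hv
    rw [if_neg]
    intro hst
    have := h s (Finsupp.mem_support_iff.1 hs) v hv hst
    subst this
    exact hne (by rw [← Finset.insert_erase hv, hst, Finset.insert_erase her])
  rw [Finset.sum_eq_single r h1]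
  · rw [Finset.sum_eq_single e]
    · rw [if_pos rfl]
    · intro v hv hne
      by_cases hx : x r = 0
      · rw [hx, zero_mul, ite_self]
      · rw [if_neg]
        intro hst
        exact hne (h _ hx v hv hst)
    · intro hh
      exact absurd her hh
  · intro hx
    have : x r = 0 := by simpa using hx
    simp [this]

theorem hom_abstract {Y : Type} (E : Finset W) (cl : Finset W → Y) (g : Y → ℝ)
    (s : Y → Finset W) (n : ℕ)
    (h1 : ∀ τ ⊆ E, s (cl τ) ⊆ τ)
    (h2 : ∀ τ ⊆ E, ∀ ρ ⊆ τ, g (cl ρ) ≤ g (cl τ))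
    (h3 : ∀ τ ⊆ E, ∀ ρ ⊆ τ, g (cl ρ) = g (cl τ) → cl ρ = cl τ)
    (h4 : ∀ τ ⊆ E, ∀ ρ ⊆ τ, s (cl τ) ⊆ ρ → cl ρ = cl τ)
    (h5 : ∀ τ ⊆ E, ∀ ρ ⊆ E, cl ρ = cl τ → cl (ρ ∪ τ) = cl τ)
    (d : ℕ) (hd : n ≤ d) :
    ∀ (m : ℕ) (K : Finset (Finset W)), K.card = m → (∀ τ ∈ K, τ ⊆ E) →
      (∀ τ ∈ K, ∀ ρ ⊆ τ, ρ ∈ K) → (∀ τ ∈ K, ∀ ρ ⊆ E, cl ρ = cl τ → ρ ∈ K) →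
      (∀ τ ∈ K, (s (cl τ)).card ≤ n) → VanishesAt F K d := by
  intro m
  induction m using Nat.strong_induction_on with
  | _ m ih =>
  intro K hm hKE hdown hsat hn x hx hbx
  rcases K.eq_empty_or_nonempty with rfl | hKne
  · refine ⟨0, by simp, ?_⟩
    have : x = 0 := by
      by_contra hne
      obtain ⟨t, ht⟩ := Finsupp.support_nonempty_iff.2 hne
      simpa using (hx t ht).1
    rw [this, bdry_eq, map_zero]
  obtain ⟨τ0, hτ0, hmax⟩ := Finset.exists_max_image K (fun τ => g (cl τ)) hKne
  set K' := K.filter (fun ρ => cl ρ ≠ cl τ0) with hK'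
  have hlt : K'.card < m := by
    rw [← hm]
    apply Finset.card_lt_card
    refine Finset.ssubset_iff_subset_ne.2 ⟨Finset.filter_subset _ _, fun h => ?_⟩
    have : τ0 ∈ K' := h ▸ hτ0
    simp [hK'] at this
  -- a face of `K` containing a face of the top class is in the top class
  have hup : ∀ ρ ∈ K, ∀ t ⊆ ρ, cl t = cl τ0 → cl ρ = cl τ0 := by
    intro ρ hρ t ht hcl
    have e1 := hmax ρ hρ
    have e2 := h2 ρ (hKE ρ hρ) t ht
    rw [← hcl]
    refine (h3 ρ (hKE ρ hρ) t ht (le_antisymm e2 ?_)).symm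
    rw [hcl]; exact e1
  have IH : VanishesAt F K' d := by
    refine ih _ hlt K' rfl ?_ ?_ ?_ ?_
    · intro τ hτ
      exact hKE τ (Finset.mem_filter.1 hτ).1
    · intro τ hτ ρ hρ
      rw [Finset.mem_filter] at hτ ⊢
      exact ⟨hdown τ hτ.1 ρ hρ, fun h => hτ.2 (hup τ hτ.1 ρ hρ h)⟩
    · intro τ hτ ρ hρ hcl
      rw [Finset.mem_filter] at hτ ⊢
      exact ⟨hsat τ hτ.1 ρ hρ hcl, fun h => hτ.2 (hcl ▸ h)⟩
    · intro τ hτ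
      exact hn τ (Finset.mem_filter.1 hτ).1
  have hsK : ∀ ρ ∈ K', ρ ∈ K := fun ρ h => (Finset.mem_filter.1 h).1
  by_cases hex : ∃ τ ∈ K, cl τ = cl τ0 ∧ τ ≠ s (cl τ0)
  swap
  · -- the class is a single small face
    push Not at hex
    have hx' : ∀ t ∈ x.support, t ∈ K' ∧ t.card = d + 1 := by
      intro t ht
      refine ⟨Finset.mem_filter.2 ⟨(hx t ht).1, fun hcl => ?_⟩, (hx t ht).2⟩
      have e := hex t (hx t ht).1 hcl
      have e2 := hn τ0 hτ0
      rw [← e, (hx t ht).2] at e2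
      omega
    obtain ⟨y, hy, hy2⟩ := IH x hx' hbx
    exact ⟨y, fun t ht => ⟨hsK _ (hy t ht).1, (hy t ht).2⟩, hy2⟩
  obtain ⟨τ, hτK, hτcl, hτne⟩ := hex
  have hsub : s (cl τ0) ⊆ τ := hτcl ▸ h1 τ (hKE τ hτK)
  obtain ⟨e, heτ, heσ⟩ : ∃ e ∈ τ, e ∉ s (cl τ0) := by
    by_contra hc
    push Not at hc
    exact hτne (Finset.Subset.antisymm hc hsub)
  have hins : ∀ ρ ∈ K, cl ρ = cl τ0 → cl (insert e ρ) = cl τ0 ∧ insert e ρ ∈ K := by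
    intro ρ hρ hcl
    have hu : cl (ρ ∪ τ) = cl τ0 := by
      rw [h5 τ (hKE τ hτK) ρ (hKE ρ hρ) (hcl.trans hτcl.symm), hτcl]
    have hsubE : ρ ∪ τ ⊆ E := Finset.union_subset (hKE ρ hρ) (hKE τ hτK)
    have hi : insert e ρ ⊆ ρ ∪ τ :=
      Finset.insert_subset (Finset.mem_union_right _ heτ) Finset.subset_union_left
    have : cl (insert e ρ) = cl τ0 := by
      rw [← hu]
      apply h4 _ hsubE _ hi
      rw [hu, ← hcl]
      exact (h1 ρ (hKE ρ hρ)).trans (Finset.subset_insert _ _)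
    exact ⟨this, hsat τ0 hτ0 _ (hi.trans hsubE) this⟩
  have hera : ∀ ρ ∈ K, cl ρ = cl τ0 → cl (ρ.erase e) = cl τ0 := by
    intro ρ hρ hcl
    rw [← hcl]
    apply h4 ρ (hKE ρ hρ) _ (Finset.erase_subset _ _)
    intro v hv
    refine Finset.mem_erase.2 ⟨?_, h1 ρ (hKE ρ hρ) hv⟩
    rintro rfl
    exact heσ (hcl ▸ hv)
  -- the cone
  let uf : Finset W → F := fun ρ =>
    if e ∈ ρ ∧ cl (ρ.erase e) = cl τ0 then fsgn F ρ e * x (ρ.erase e) else 0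
  let u : Finset W →₀ F := Finsupp.onFinset (x.support.image (insert e)) uf (by
    intro ρ hρ
    simp only [uf] at hρ
    split_ifs at hρ with hc
    · refine Finset.mem_image.2 ⟨ρ.erase e, ?_, Finset.insert_erase hc.1⟩
      rw [Finsupp.mem_support_iff]
      exact right_ne_zero_of_mul hρ
    · exact absurd rfl hρ)
  have hu_apply : ∀ ρ, u ρ = if e ∈ ρ ∧ cl (ρ.erase e) = cl τ0 then
      fsgn F ρ e * x (ρ.erase e) else 0 := fun ρ => rfl
  have hu_ne : ∀ ρ, u ρ ≠ 0 → e ∈ ρ ∧ ρ ∈ K ∧ cl ρ = cl τ0 ∧ ρ.card = d + 2 := by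
    intro ρ hρ
    rw [hu_apply] at hρ
    split_ifs at hρ with hc
    · have hxr := right_ne_zero_of_mul hρ
      have h6 := hx _ (Finsupp.mem_support_iff.2 hxr)
      have h7 := hins _ h6.1 hc.2
      rw [Finset.insert_erase hc.1] at h7
      refine ⟨hc.1, h7.2, h7.1, ?_⟩
      have := Finset.card_erase_add_one hc.1
      omega
    · exact absurd rfl hρ
  set x2 : Finset W →₀ F := x - bdryL F u with hx2
  have hx2b : bdryL F x2 = 0 := by
    rw [hx2, map_sub, bdryL_bdryL, ← bdry_eq, hbx, sub_zero]
  have hx2K : ∀ ρ, x2 ρ ≠ 0 → ρ ∈ K ∧ ρ.card = d + 1 := by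
    intro ρ hρ
    by_cases hxρ : x ρ = 0
    · have : bdryL F u ρ ≠ 0 := by
        intro h0
        apply hρ
        simp [hx2, hxρ, h0]
      obtain ⟨r, hr, v, hv, rfl⟩ := mem_support_bdryL F this
      have h6 := hu_ne r hr
      refine ⟨hdown r h6.2.1 _ (Finset.erase_subset _ _), ?_⟩
      have := Finset.card_erase_add_one hv
      omega
    · exact hx ρ (Finsupp.mem_support_iff.2 hxρ)
  have hx2a : ∀ t, e ∉ t → cl t = cl τ0 → x2 t = 0 := by
    intro t het hcl
    obtain ⟨r, her, rfl⟩ : ∃ r : Finset W, e ∈ r ∧ r.erase e = t :=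
      ⟨insert e t, Finset.mem_insert_self _ _, Finset.erase_insert het⟩
    have := bdryL_coeff F (x := u) her (by
      intro r' hr v hv hrt
      by_contra hne
      apply het
      rw [← hrt]
      exact Finset.mem_erase.2 ⟨fun h => hne h.symm, (hu_ne r' hr).1⟩)
    have e2 : u r = fsgn F r e * x (r.erase e) := by
      rw [hu_apply, if_pos ⟨her, hcl⟩]
    rw [hx2, Finsupp.sub_apply, this, e2, mul_comm, ← mul_assoc, fsgn_mul_self, one_mul, sub_self]
  have hx2c : ∀ ρ, x2 ρ ≠ 0 → cl ρ ≠ cl τ0 := by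
    intro ρ hρ hcl
    by_cases heρ : e ∈ ρ
    swap
    · exact hρ (hx2a ρ heρ hcl)
    have hcl' := hera ρ (hx2K ρ hρ).1 hcl
    have := bdryL_coeff F (x := x2) heρ (by
      intro r hr v hv hrt
      have hrK := (hx2K r hr).1
      have hrcl : cl r = cl τ0 := hup r hrK (ρ.erase e) (hrt ▸ Finset.erase_subset _ _) hcl'
      have her : e ∈ r := by
        by_contra h
        exact hr (hx2a r h hrcl)
      by_contra hne
      apply Finset.notMem_erase e ρ
      rw [← hrt]
      exact Finset.mem_erase.2 ⟨fun h => hne h.symm, her⟩)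
    rw [hx2b] at this
    exact mul_ne_zero hρ (fsgn_ne_zero F ρ e) this.symm
  obtain ⟨y, hy, hy2⟩ := IH x2 (by
    intro t ht
    have ht' := Finsupp.mem_support_iff.1 ht
    exact ⟨Finset.mem_filter.2 ⟨(hx2K t ht').1, hx2c t ht'⟩, (hx2K t ht').2⟩) (by rw [bdry_eq, hx2b])
  refine ⟨y + u, ?_, ?_⟩
  · intro t ht
    have ht' := Finsupp.mem_support_iff.1 ht
    by_cases hut : u t = 0
    · have hyt : y t ≠ 0 := by
        intro h
        apply ht'
        simp [hut, h]
      have := hy t (Finsupp.mem_support_iff.2 hyt)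
      exact ⟨hsK _ this.1, this.2⟩
    · have := hu_ne t hut
      exact ⟨this.2.1, this.2.2.2⟩
  · rw [bdry_eq, map_add, ← bdry_eq, hy2, hx2]
    abel

end Hom

section Graph

noncomputable def gM {I U : Type} (a b : I → U) : I ⊕ U → U → ℝ :=
  Sum.elim (fun e v => if v = a e ∨ v = b e then 1 else 0) (fun u => Pi.single u 1)

variable {I U : Type} [Fintype I] [Fintype U] {a b : I → U}

lemma gM_sum (y : I ⊕ U → ℝ) (v : U) : (∑ j, y j • gM a b j) v =
    ∑ e, (if v = a e ∨ v = b e then y (Sum.inl e) else 0) + y (Sum.inr v) := by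
  rw [Finset.sum_apply, Fintype.sum_sum_type]
  congr 1
  · refine Finset.sum_congr rfl fun e _ => ?_
    simp [gM]
  · simp [gM, Pi.single_apply]

lemma gM_ker {d : I ⊕ U → ℝ} (hd : ∑ j, d j • gM a b j = 0) (h0 : ∀ e, d (Sum.inl e) = 0) :
    d = 0 := by
  funext j
  rcases j with e | v
  · exact h0 e
  · have := congrFun hd v
    rw [gM_sum] at this
    simpa [h0] using this

lemma gM_generic (a b : I → U) (r : ℝ) (hr : 1 < r) : ∃ (c : U → ℝ) (w : I ⊕ U → ℝ),
    (∀ v, 1 ≤ c v ∧ c v ≤ r) ∧ (∀ e, 1 ≤ w (Sum.inl e) ∧ w (Sum.inl e) ≤ r) ∧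
    (∀ v, w (Sum.inr v) = 0) ∧ LPNondeg (gM a b) w ∧ LPGen (gM a b) c := by
  obtain ⟨c, hc1, hc2⟩ := exists_generic
    (fun S : {S : Set (I ⊕ U) // Submodule.span ℝ (gM a b '' S) ≠ ⊤} =>
      Submodule.span ℝ (gM a b '' S.1)) (fun S => S.2) r hr
  let Q : Set (I ⊕ U) → Prop := fun S =>
    ∃ d : I ⊕ U → ℝ, d ≠ 0 ∧ (∀ j, j ∉ S → d j = 0) ∧ ∑ j, d j • gM a b j = 0
  have hQ : ∀ S : {S // Q S}, ∃ d : I ⊕ U → ℝ, d ≠ 0 ∧ (∀ j, j ∉ S.1 → d j = 0) ∧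
    ∑ j, d j • gM a b j = 0 := fun S => S.2
  choose D hD1 hD2 hD3 using hQ
  obtain ⟨w, hw1, hw2⟩ := exists_generic
    (fun S : {S // Q S} => LinearMap.ker
      (∑ e, D S (Sum.inl e) • (LinearMap.proj e : (I → ℝ) →ₗ[ℝ] ℝ))) (by
      intro S htop
      apply hD1 S
      apply gM_ker (hD3 S)
      intro e
      have : (Pi.single e 1 : I → ℝ) ∈ LinearMap.ker
        (∑ e, D S (Sum.inl e) • (LinearMap.proj e : (I → ℝ) →ₗ[ℝ] ℝ)) := by
        rw [htop]; trivial
      simpa [LinearMap.sum_apply, Pi.single_apply] using this) r hr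
  refine ⟨c, Sum.elim w (fun _ => 0), hc1, hw1, fun _ => rfl, ?_, ?_⟩
  · intro S hS
    refine ⟨D ⟨S, hS⟩, hD2 ⟨S, hS⟩, hD3 ⟨S, hS⟩, ?_⟩
    have := hw2 ⟨S, hS⟩
    intro h0
    apply this
    rw [Fintype.sum_sum_type] at h0
    simp only [Sum.elim_inl, Sum.elim_inr, zero_mul, Finset.sum_const_zero, add_zero] at h0
    simp only [LinearMap.mem_ker, LinearMap.sum_apply, LinearMap.smul_apply, LinearMap.proj_apply,
      smul_eq_mul]
    rw [← h0]
    exact Finset.sum_congr rfl fun e _ => mul_comm _ _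
  · intro S hS
    by_contra hne
    exact hc2 ⟨S, hne⟩ hS

variable {c : U → ℝ} {w : I ⊕ U → ℝ} {A : Set (I ⊕ U)} {y : I ⊕ U → ℝ} {r : ℝ}

lemma gfeas_eq (hy : LPFeas (gM a b) c A y) (v : U) :
    ∑ e, (if v = a e ∨ v = b e then y (Sum.inl e) else 0) + y (Sum.inr v) = c v := by
  rw [← gM_sum, hy.2.2]

lemma gfeas_le (hy : LPFeas (gM a b) c A y) (v : U) :
    ∑ e, (if v = a e ∨ v = b e then y (Sum.inl e) else 0) ≤ c v := by
  have := gfeas_eq hy v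
  have := hy.1 (Sum.inr v)
  linarith

lemma gfeas_bdd (hy : LPFeas (gM a b) c A y) (hc : ∀ v, c v ≤ r) (j : I ⊕ U) : y j ≤ r := by
  have nn : ∀ v, ∀ e ∈ (Finset.univ : Finset I),
      0 ≤ (if v = a e ∨ v = b e then y (Sum.inl e) else 0) := by
    intro v e _
    split_ifs
    · exact hy.1 _
    · exact le_refl _
  rcases j with e | v
  · have h1 := Finset.single_le_sum (nn (a e)) (Finset.mem_univ e)
    simp only [true_or, if_true] at h1
    exact h1.trans ((gfeas_le hy (a e)).trans (hc _))
  · have h1 := Finset.sum_nonneg (nn v)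
    have := gfeas_eq hy v
    have := hc v
    linarith

lemma gopt_exists (hc : ∀ v, 1 ≤ c v ∧ c v ≤ r) (hA : ∀ v, Sum.inr v ∈ A) :
    ∃ y, LPOpt (gM a b) c w A y := by
  apply lp_exists
  · refine ⟨Sum.elim (fun _ => 0) c, ?_, ?_, ?_⟩
    · rintro (e | v)
      · simp
      · simp only [Sum.elim_inr]; linarith [(hc v).1]
    · rintro (e | v) h
      · simp
      · exact absurd (hA v) h
    · funext v
      rw [gM_sum]
      simp
  · exact ⟨r, fun y hy j => gfeas_bdd hy (fun v => (hc v).2) j⟩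

lemma gval (hw0 : ∀ v, w (Sum.inr v) = 0) (y : I ⊕ U → ℝ) :
    ∑ j, w j * y j = ∑ e, w (Sum.inl e) * y (Sum.inl e) := by
  rw [Fintype.sum_sum_type]
  simp [hw0]

lemma gval_le (hc : ∀ v, 1 ≤ c v ∧ c v ≤ r) (hw : ∀ e, 1 ≤ w (Sum.inl e) ∧ w (Sum.inl e) ≤ r)
    (hw0 : ∀ v, w (Sum.inr v) = 0) (hr : 1 < r) (hy : LPFeas (gM a b) c A y) (C : Finset U)
    (hC : ∀ e, Sum.inl e ∈ A → a e ∈ C ∨ b e ∈ C) : ∑ j, w j * y j ≤ r * r * C.card := by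
  rw [gval hw0]
  calc ∑ e, w (Sum.inl e) * y (Sum.inl e)
      ≤ ∑ e, r * ∑ v ∈ C, (if v = a e ∨ v = b e then y (Sum.inl e) else 0) := by
        apply Finset.sum_le_sum
        intro e _
        apply mul_le_mul (hw e).2 _ (hy.1 _) (by linarith)
        have nn : ∀ v ∈ C, 0 ≤ (if v = a e ∨ v = b e then y (Sum.inl e) else 0) := by
          intro v _
          split_ifs
          · exact hy.1 _
          · exact le_refl _
        by_cases he : Sum.inl e ∈ A
        · rcases hC e he with h | h
          · have := Finset.single_le_sum nn h
            simpa using this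
          · have := Finset.single_le_sum nn h
            simpa using this
        · rw [hy.2.1 _ he]; simp
    _ = r * ∑ v ∈ C, ∑ e, (if v = a e ∨ v = b e then y (Sum.inl e) else 0) := by
        rw [← Finset.mul_sum, Finset.sum_comm]
    _ ≤ r * ∑ v ∈ C, r := by
        apply mul_le_mul_of_nonneg_left _ (by linarith)
        exact Finset.sum_le_sum fun v _ => (gfeas_le hy v).trans (hc v).2
    _ = r * r * C.card := by
        rw [Finset.sum_const, nsmul_eq_mul]; ring

lemma gval_ge (hc : ∀ v, 1 ≤ c v ∧ c v ≤ r) (hw : ∀ e, 1 ≤ w (Sum.inl e) ∧ w (Sum.inl e) ≤ r)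
    (hw0 : ∀ v, w (Sum.inr v) = 0) (hA : ∀ v, Sum.inr v ∈ A) (hy : LPOpt (gM a b) c w A y)
    (m : Finset I) (hmA : ∀ e ∈ m, Sum.inl e ∈ A)
    (hm : ∀ v, ∀ e ∈ m, ∀ f ∈ m, (v = a e ∨ v = b e) → (v = a f ∨ v = b f) → e = f) :
    (m.card : ℝ) ≤ ∑ j, w j * y j := by
  let x : I → ℝ := fun e => if e ∈ m then 1 else 0
  have hx : LPFeas (gM a b) c A (Sum.elim x
      (fun v => c v - ∑ e, (if v = a e ∨ v = b e then x e else 0))) := by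
    refine ⟨?_, ?_, ?_⟩
    · rintro (e | v)
      · simp only [Sum.elim_inl, x]; split_ifs <;> norm_num
      · simp only [Sum.elim_inr]
        have h1 : ∑ e, (if v = a e ∨ v = b e then x e else 0) =
            ((Finset.univ.filter fun e => (v = a e ∨ v = b e) ∧ e ∈ m).card : ℝ) := by
          rw [Finset.card_filter]
          push_cast
          refine Finset.sum_congr rfl fun e _ => ?_
          simp only [x]
          split_ifs <;> simp_all
        have h2 : (Finset.univ.filter fun e => (v = a e ∨ v = b e) ∧ e ∈ m).card ≤ 1 := by
          rw [Finset.card_le_one]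
          intro e he f hf
          simp only [Finset.mem_filter, Finset.mem_univ, true_and] at he hf
          exact hm v e he.2 f hf.2 he.1 hf.1
        have h3 : ((Finset.univ.filter fun e => (v = a e ∨ v = b e) ∧ e ∈ m).card : ℝ) ≤ 1 := by
          exact_mod_cast h2
        rw [h1]
        linarith [(hc v).1]
    · rintro (e | v) h
      · simp only [Sum.elim_inl, x]
        rw [if_neg]
        exact fun he => h (hmA e he)
      · exact absurd (hA v) h
    · funext v
      rw [gM_sum]
      simp
  refine le_trans ?_ (hy.2 _ hx)
  rw [gval hw0]
  simp only [Sum.elim_inl]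
  calc (m.card : ℝ) = ∑ e, x e := by simp [x]
    _ ≤ _ := by
      apply Finset.sum_le_sum
      intro e _
      simp only [x]
      split_ifs
      · linarith [(hw e).1]
      · simp

lemma gsupp_card (hN : LPNondeg (gM a b) w) (sd : U → Bool) (hsa : ∀ e, sd (a e) = true)
    (hsb : ∀ e, sd (b e) = false)
    (hc : ∀ v, 1 ≤ c v ∧ c v ≤ r) (hw : ∀ e, 1 ≤ w (Sum.inl e) ∧ w (Sum.inl e) ≤ r)
    (hw0 : ∀ v, w (Sum.inr v) = 0) (hy : LPOpt (gM a b) c w A y) (k : ℕ)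
    (hk : ∑ j, w j * y j < k) :
    (Finset.univ.filter fun e : I => y (Sum.inl e) ≠ 0).card ≤ 2 * k - 2 := by
  have hli : LinearIndependent ℝ (fun j : {j // y j ≠ 0} => gM a b j.1) := by
    rw [Fintype.linearIndependent_iff]
    intro g hg i
    have := lp_indep hN hy (d := fun j => if h : y j ≠ 0 then g ⟨j, h⟩ else 0)
      (fun j hj => by simp [hj]) (by
        rw [← hg]
        have e1 : ∑ j ∈ Finset.univ.filter (fun j => y j ≠ 0),
            (if h : y j ≠ 0 then g ⟨j, h⟩ else 0) • gM a b j
            = ∑ i : {j // y j ≠ 0}, (if h : y i.1 ≠ 0 then g ⟨i.1, h⟩ else 0) • gM a b i.1 :=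
          Finset.sum_subtype _ (fun j => by simp) _
        have e2 : ∑ i : {j // y j ≠ 0}, g i • gM a b i.1 = ∑ i : {j // y j ≠ 0},
            (if h : y i.1 ≠ 0 then g ⟨i.1, h⟩ else 0) • gM a b i.1 := by
          refine Finset.sum_congr rfl fun i _ => ?_
          rw [dif_pos i.2]
        rw [e2, ← e1, Finset.sum_filter]
        refine Finset.sum_congr rfl fun j _ => ?_
        by_cases h : y j = 0 <;> simp [h])
    have h2 := congrFun this i.1
    simpa [i.2] using h2
  have hcard := hli.fintype_card_le_finrank
  rw [Module.finrank_fintype_fun_eq_card, Fintype.card_subtype] at hcard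
  have hsplit : (Finset.univ.filter fun j : I ⊕ U => y j ≠ 0).card =
      (Finset.univ.filter fun e : I => y (Sum.inl e) ≠ 0).card +
      (Finset.univ.filter fun v : U => y (Sum.inr v) ≠ 0).card := by
    simp only [Finset.card_filter]
    rw [Fintype.sum_sum_type]
  have hcompl := Finset.card_filter_add_card_filter_not (s := (Finset.univ : Finset U))
    (fun v : U => y (Sum.inr v) ≠ 0)
  have hT : ∀ s : Bool, (Finset.univ.filter fun v : U => y (Sum.inr v) = 0 ∧ sd v = s).card < k := by
    intro s
    have hlt : ((Finset.univ.filter fun v : U => y (Sum.inr v) = 0 ∧ sd v = s).card : ℝ) < k := by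
      refine lt_of_le_of_lt ?_ hk
      rw [gval hw0]
      calc ((Finset.univ.filter fun v : U => y (Sum.inr v) = 0 ∧ sd v = s).card : ℝ)
          = ∑ v ∈ Finset.univ.filter (fun v : U => y (Sum.inr v) = 0 ∧ sd v = s), (1 : ℝ) := by
            simp
        _ ≤ ∑ v ∈ Finset.univ.filter (fun v : U => y (Sum.inr v) = 0 ∧ sd v = s),
            ∑ e, (if v = a e ∨ v = b e then y (Sum.inl e) else 0) := by
            apply Finset.sum_le_sum
            intro v hv
            have h1 := gfeas_eq hy.1 v
            rw [(Finset.mem_filter.1 hv).2.1] at h1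
            linarith [(hc v).1]
        _ = ∑ e, ∑ v ∈ Finset.univ.filter (fun v : U => y (Sum.inr v) = 0 ∧ sd v = s),
             (if v = a e ∨ v = b e then y (Sum.inl e) else 0) := Finset.sum_comm
        _ ≤ ∑ e, w (Sum.inl e) * y (Sum.inl e) := by
            apply Finset.sum_le_sum
            intro e _
            have hye := hy.1.1 (Sum.inl e)
            have : ∑ v ∈ Finset.univ.filter (fun v : U => y (Sum.inr v) = 0 ∧ sd v = s),
                (if v = a e ∨ v = b e then y (Sum.inl e) else 0) ≤
                ∑ v, if v = (if s then a e else b e) then y (Sum.inl e) else 0 := by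
              rw [Finset.sum_filter]
              apply Finset.sum_le_sum
              intro v _
              by_cases h1 : y (Sum.inr v) = 0 ∧ sd v = s
              · rw [if_pos h1]
                by_cases h2 : v = a e ∨ v = b e
                · rw [if_pos h2, if_pos]
                  rcases h2 with rfl | rfl
                  · rw [hsa] at h1; simp [← h1.2]
                  · rw [hsb] at h1; simp [← h1.2]
                · rw [if_neg h2]
                  split_ifs <;> simp [hye]
              · rw [if_neg h1]
                split_ifs <;> simp [hye]
            refine this.trans ?_
            rw [Finset.sum_ite_eq' Finset.univ, if_pos (Finset.mem_univ _)]
            nlinarith [(hw e).1]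
    exact_mod_cast hlt
  have hTs : (Finset.univ.filter fun v : U => ¬ (y (Sum.inr v) ≠ 0)).card =
      (Finset.univ.filter fun v : U => y (Sum.inr v) = 0 ∧ sd v = true).card +
      (Finset.univ.filter fun v : U => y (Sum.inr v) = 0 ∧ sd v = false).card := by
    rw [← Finset.card_union_of_disjoint]
    · congr 1
      ext v
      simp only [Finset.mem_filter, Finset.mem_univ, true_and, Finset.mem_union, not_not]
      cases sd v <;> simp
    · rw [Finset.disjoint_left]
      intro v h1 h2
      simp only [Finset.mem_filter] at h1 h2
      simp [h1.2.2] at h2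
  have e1 := hT true
  have e2 := hT false
  rw [Finset.card_univ] at hcompl
  omega

end Graph

section Konig

lemma card_le_nu {V : Type} {τ M : Finset (Sym2 V)} (hM : M ⊆ τ) (h : IsMatching M) :
    M.card ≤ nu τ := by
  unfold nu
  exact Finset.le_sup (f := Finset.card) (Finset.mem_filter.2 ⟨Finset.mem_powerset.2 hM, h⟩)

lemma exists_nu {V : Type} (τ : Finset (Sym2 V)) : ∃ M ⊆ τ, IsMatching M ∧ M.card = nu τ := by
  unfold nu
  have hne : (τ.powerset.filter fun M => IsMatching M).Nonempty :=
    ⟨∅, Finset.mem_filter.2 ⟨by simp, by simp [IsMatching]⟩⟩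
  obtain ⟨M, hM, h⟩ := Finset.exists_mem_eq_sup _ hne Finset.card
  rw [Finset.mem_filter, Finset.mem_powerset] at hM
  exact ⟨M, hM.1, hM.2, h.symm⟩

lemma nu_mono {V : Type} {τ ρ : Finset (Sym2 V)} (h : ρ ⊆ τ) : nu ρ ≤ nu τ := by
  obtain ⟨M, h1, h2, h3⟩ := exists_nu ρ
  rw [← h3]
  exact card_le_nu (h1.trans h) h2

/-- König's theorem. -/
lemma konig {V : Type} (side : V → Bool) (a b : Sym2 V → V) (τ : Finset (Sym2 V))
    (hab : ∀ e ∈ τ, e = s(a e, b e) ∧ side (a e) = true ∧ side (b e) = false) :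
    ∃ C : Finset V, C.card ≤ nu τ ∧ (∀ e ∈ τ, a e ∈ C ∨ b e ∈ C) ∧
      C ⊆ τ.image a ∪ τ.image b := by
  set As := τ.image a with hAs
  let N : Finset V → Finset V := fun X => (τ.filter fun e => a e ∈ X).image b
  obtain ⟨X, hX, hmin⟩ := Finset.exists_min_image As.powerset
    (fun X => (As \ X).card + (N X).card) ⟨∅, by simp⟩
  have hXA := Finset.mem_powerset.1 hX
  set μ := (As \ X).card + (N X).card with hμ
  refine ⟨(As \ X) ∪ N X, ?_, ?_, ?_⟩
  rotate_left
  · intro e he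
    by_cases h : a e ∈ X
    · right
      exact Finset.mem_union_right _ (Finset.mem_image_of_mem _ (Finset.mem_filter.2 ⟨he, h⟩))
    · left
      exact Finset.mem_union_left _ (Finset.mem_sdiff.2 ⟨Finset.mem_image_of_mem _ he, h⟩)
  · apply Finset.union_subset
    · exact (Finset.sdiff_subset).trans Finset.subset_union_left
    · exact (Finset.image_subset_image (Finset.filter_subset _ _)).trans Finset.subset_union_right
  refine (Finset.card_union_le _ _).trans ?_
  rw [← hμ]
  have hμA : μ ≤ As.card := by
    have := hmin ∅ (by simp)
    simpa [N] using this
  let t : {v // v ∈ As} → Finset (V ⊕ Fin (As.card - μ)) := fun v => (N {v.1}).disjSum Finset.univ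
  have hall : ∀ s : Finset {v // v ∈ As}, s.card ≤ (s.biUnion t).card := by
    intro s
    rcases s.eq_empty_or_nonempty with rfl | ⟨v0, hv0⟩
    · simp
    let X' : Finset V := s.image Subtype.val
    have hX'c : X'.card = s.card := Finset.card_image_of_injective _ Subtype.val_injective
    have hX'A : X' ⊆ As := by
      intro v hv
      obtain ⟨u, _, rfl⟩ := Finset.mem_image.1 hv
      exact u.2
    have h1 := hmin X' (Finset.mem_powerset.2 hX'A)
    have h2 : (N X').disjSum (Finset.univ : Finset (Fin (As.card - μ))) ⊆ s.biUnion t := by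
      intro z hz
      rw [Finset.mem_biUnion]
      rcases z with z | z
      · rw [Finset.inl_mem_disjSum] at hz
        obtain ⟨e, he, rfl⟩ := Finset.mem_image.1 hz
        obtain ⟨he, heX⟩ := Finset.mem_filter.1 he
        obtain ⟨u, hu, hue⟩ := Finset.mem_image.1 heX
        refine ⟨u, hu, ?_⟩
        rw [Finset.inl_mem_disjSum]
        exact Finset.mem_image_of_mem _ (Finset.mem_filter.2 ⟨he, by simp [hue]⟩)
      · exact ⟨v0, hv0, by simp [t]⟩
    have h3 := Finset.card_le_card h2
    rw [Finset.card_disjSum, Finset.card_univ, Fintype.card_fin] at h3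
    have h4 := Finset.card_sdiff_add_card_eq_card hX'A
    omega
  obtain ⟨f, hfi, hft⟩ := (Finset.all_card_le_biUnion_card_iff_exists_injective t).1 hall
  -- matched edges
  let Mt : Finset (Sym2 V) := τ.filter fun e => ∃ h : a e ∈ As, f ⟨a e, h⟩ = Sum.inl (b e)
  have hMt : ∀ e ∈ Mt, e ∈ τ ∧ ∃ h : a e ∈ As, f ⟨a e, h⟩ = Sum.inl (b e) :=
    fun e he => Finset.mem_filter.1 he
  have hMa : ∀ e ∈ Mt, ∀ e' ∈ Mt, a e = a e' → e = e' := by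
    intro e he e' he' h
    obtain ⟨h1, h2, h3⟩ := hMt e he
    obtain ⟨h1', h2', h3'⟩ := hMt e' he'
    have hb : b e = b e' := by
      have : f ⟨a e, h2⟩ = f ⟨a e', h2'⟩ := by simp only [h]
      rw [h3, h3'] at this
      exact Sum.inl_injective this
    rw [(hab e h1).1, (hab e' h1').1, h, hb]
  have hMb : ∀ e ∈ Mt, ∀ e' ∈ Mt, b e = b e' → e = e' := by
    intro e he e' he' h
    obtain ⟨h1, h2, h3⟩ := hMt e he
    obtain ⟨h1', h2', h3'⟩ := hMt e' he'
    rw [h, ← h3'] at h3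
    have := congrArg Subtype.val (hfi h3)
    exact hMa e he e' he' this
  have hmem : ∀ e ∈ τ, ∀ v, v ∈ e ↔ v = a e ∨ v = b e := by
    intro e he v
    conv_lhs => rw [(hab e he).1]
    exact Sym2.mem_iff
  have hmatch : IsMatching Mt := by
    refine ⟨?_, ?_⟩
    · intro e he hd
      obtain ⟨h1, h2, h3⟩ := hab e (hMt e he).1
      rw [h1, Sym2.mk_isDiag_iff] at hd
      rw [← hd, h2] at h3
      exact absurd h3 (by simp)
    · intro e he e' he' hne v hv hv'
      have g := hab e (hMt e he).1
      have g' := hab e' (hMt e' he').1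
      rw [hmem e (hMt e he).1] at hv
      rw [hmem e' (hMt e' he').1] at hv'
      rcases hv with rfl | rfl <;> rcases hv' with h | h
      · exact hne (hMa e he e' he' h)
      · have := g.2.1; rw [h, g'.2.2] at this; simp at this
      · have := g.2.2; rw [h, g'.2.1] at this; simp at this
      · exact hne (hMb e he e' he' h)
  refine le_trans ?_ (card_le_nu (M := Mt) (fun e he => (hMt e he).1) hmatch)
  -- counting
  have hcount : (Finset.univ : Finset {v // v ∈ As}).image f ⊆
      (Mt.image b).disjSum (Finset.univ : Finset (Fin (As.card - μ))) := by
    intro z hz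
    obtain ⟨v, _, rfl⟩ := Finset.mem_image.1 hz
    rcases hfv : f v with u | i
    · rw [Finset.inl_mem_disjSum]
      have h1 := hft v
      rw [hfv, Finset.inl_mem_disjSum] at h1
      obtain ⟨e, he, rfl⟩ := Finset.mem_image.1 h1
      obtain ⟨he, hev⟩ := Finset.mem_filter.1 he
      have hev : a e = v.1 := by simpa using hev
      refine Finset.mem_image_of_mem _ (Finset.mem_filter.2 ⟨he, ?_, ?_⟩)
      · rw [hev]; exact v.2
      · rw [← hfv]; congr 1; exact Subtype.ext hev
    · simp
  have h5 := Finset.card_le_card hcount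
  rw [Finset.card_image_of_injective _ hfi, Finset.card_disjSum, Finset.card_univ,
    Finset.card_univ, Fintype.card_fin, Fintype.card_coe] at h5
  have h6 : (Mt.image b).card ≤ Mt.card := Finset.card_image_le
  omega

end Konig

section Final

lemma exists_ratio (k : ℕ) (hk : 2 ≤ k) : ∃ r : ℝ, 1 < r ∧ r * r * ((k : ℝ) - 1) < k := by
  have hk' : (2 : ℝ) ≤ k := by exact_mod_cast hk
  refine ⟨1 + 1 / (3 * k), ?_, ?_⟩
  · have : (0 : ℝ) < 1 / (3 * k) := by positivity
    linarith
  · set x : ℝ := 1 / (3 * k) with hx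
    have h0 : 0 < x := by positivity
    have h1 : x * k = 1 / 3 := by rw [hx]; field_simp
    have h2 : x ≤ 1 / 6 := by nlinarith
    have e : (1 + x) * (1 + x) * ((k : ℝ) - 1) =
        k - 1 + 2 * (x * k) + x * (x * k) - 2 * x - x * x := by ring
    rw [e, h1]
    nlinarith

end Final

/-- For `k ≥ 2` and any finite bipartite graph with edge set `E`, the non-matching complex
`NM_k(E)` has vanishing reduced homology (over any field) in all dimensions `d ≥ 2k - 2`. -/
theorem NM_vanishing_bipartite {V : Type} [LinearOrder (Sym2 V)] (F : Type) [Field F]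
    (k : ℕ) (hk : 2 ≤ k) (side : V → Bool) (E : Finset (Sym2 V))
    (hbip : ∀ e ∈ E, ∃ x y, e = s(x, y) ∧ side x ≠ side y) :
    ∀ d, 2 * k - 2 ≤ d → VanishesAt F (NM k E) d := by
  intro d hd
  -- oriented endpoints
  have hor : ∀ e : {e // e ∈ E}, ∃ p : V × V, e.1 = s(p.1, p.2) ∧ side p.1 = true ∧
      side p.2 = false := by
    rintro ⟨e, he⟩
    obtain ⟨x, y, h, hne⟩ := hbip e he
    cases hx : side x <;> cases hy : side y
    · rw [hx, hy] at hne; exact absurd rfl hne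
    · exact ⟨(y, x), h.trans Sym2.eq_swap, hy, hx⟩
    · exact ⟨(x, y), h, hx, hy⟩
    · rw [hx, hy] at hne; exact absurd rfl hne
  choose P hP using hor
  let VE : Finset V := E.attach.image (fun e => (P e).1) ∪ E.attach.image (fun e => (P e).2)
  have hVa : ∀ e, (P e).1 ∈ VE := fun e =>
    Finset.mem_union_left _ (Finset.mem_image_of_mem _ (Finset.mem_attach _ _))
  have hVb : ∀ e, (P e).2 ∈ VE := fun e =>
    Finset.mem_union_right _ (Finset.mem_image_of_mem _ (Finset.mem_attach _ _))
  let a : {e // e ∈ E} → {v // v ∈ VE} := fun e => ⟨(P e).1, hVa e⟩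
  let b : {e // e ∈ E} → {v // v ∈ VE} := fun e => ⟨(P e).2, hVb e⟩
  let sd : {v // v ∈ VE} → Bool := fun v => side v.1
  have hsa : ∀ e, sd (a e) = true := fun e => (hP e).2.1
  have hsb : ∀ e, sd (b e) = false := fun e => (hP e).2.2
  have hmem : ∀ (e : {e // e ∈ E}) (v : {v // v ∈ VE}), (v = a e ∨ v = b e) → v.1 ∈ e.1 := by
    intro e v h
    rw [(hP e).1, Sym2.mem_iff]
    rcases h with rfl | rfl
    · exact Or.inl rfl
    · exact Or.inr rfl
  obtain ⟨r, hr, hrk⟩ := exists_ratio k hk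
  obtain ⟨c, w, hc, hw, hw0, hN, hG⟩ := gM_generic a b r hr
  let A : Finset (Sym2 V) → Set ({e // e ∈ E} ⊕ {v // v ∈ VE}) := fun τ =>
    {j | ∀ e, j = Sum.inl e → e.1 ∈ τ}
  have hAl : ∀ τ e, Sum.inl e ∈ A τ ↔ e.1 ∈ τ := by
    intro τ e
    constructor
    · intro h; exact h e rfl
    · rintro h e' he'
      rw [← Sum.inl_injective he']; exact h
  have hAr : ∀ τ v, Sum.inr v ∈ A τ := by
    intro τ v e h
    exact absurd h (by simp)
  have hAmono : ∀ ρ τ, ρ ⊆ τ → A ρ ⊆ A τ := by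
    intro ρ τ h j hj e he
    exact h (hj e he)
  have hex : ∀ τ, ∃ y, LPOpt (gM a b) c w (A τ) y := fun τ => gopt_exists hc (hAr τ)
  choose cl hcl using hex
  let g : ({e // e ∈ E} ⊕ {v // v ∈ VE} → ℝ) → ℝ := fun y => ∑ j, w j * y j
  let s : ({e // e ∈ E} ⊕ {v // v ∈ VE} → ℝ) → Finset (Sym2 V) := fun y =>
    (Finset.univ.filter fun e : {e // e ∈ E} => y (Sum.inl e) ≠ 0).image Subtype.val
  have hmonoF : ∀ B B' : Set ({e // e ∈ E} ⊕ {v // v ∈ VE}), B ⊆ B' → ∀ y,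
      LPFeas (gM a b) c B y → LPFeas (gM a b) c B' y :=
    fun B B' h y hy => ⟨hy.1, fun j hj => hy.2.1 j (fun h' => hj (h h')), hy.2.2⟩
  -- value versus matching number
  have hval : ∀ τ ⊆ E, (g (cl τ) < k ↔ nu τ < k) := by
    intro τ hτ
    constructor
    · intro h
      obtain ⟨M, hM, hMm, hMc⟩ := exists_nu τ
      have h1 := gval_ge hc hw hw0 (hAr τ) (hcl τ)
        (Finset.univ.filter fun e : {e // e ∈ E} => e.1 ∈ M)
        (by
          intro e he
          rw [hAl]
          exact hM (Finset.mem_filter.1 he).2)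
        (by
          intro v e he f hf hv hv'
          by_contra hne
          exact hMm.2 e.1 (Finset.mem_filter.1 he).2 f.1 (Finset.mem_filter.1 hf).2
            (fun h => hne (Subtype.ext h)) v.1 (hmem e v hv) (hmem f v hv'))
      have h2 : M.card ≤ (Finset.univ.filter fun e : {e // e ∈ E} => e.1 ∈ M).card := by
        have : M ⊆ (Finset.univ.filter fun e : {e // e ∈ E} => e.1 ∈ M).image Subtype.val := by
          intro e he
          exact Finset.mem_image.2 ⟨⟨e, hτ (hM he)⟩,
            Finset.mem_filter.2 ⟨Finset.mem_univ _, he⟩, rfl⟩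
        exact (Finset.card_le_card this).trans Finset.card_image_le
      have h3 : ((nu τ : ℕ) : ℝ) < k := by
        refine lt_of_le_of_lt ?_ (lt_of_le_of_lt h1 h)
        rw [← hMc]
        exact_mod_cast h2
      exact_mod_cast h3
    · intro h
      rcases τ.eq_empty_or_nonempty with rfl | ⟨e0, he0⟩
      · have := gval_le hc hw hw0 hr (hcl ∅).1 ∅ (by
          intro e he
          rw [hAl] at he
          simp at he)
        simp only [Finset.card_empty, Nat.cast_zero, mul_zero] at this
        refine lt_of_le_of_lt this ?_
        have : 0 < k := by omega
        exact_mod_cast this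
      let a' : Sym2 V → V := fun e => if h : e ∈ E then (P ⟨e, h⟩).1 else (P ⟨e0, hτ he0⟩).1
      let b' : Sym2 V → V := fun e => if h : e ∈ E then (P ⟨e, h⟩).2 else (P ⟨e0, hτ he0⟩).2
      have ha' : ∀ e : {e // e ∈ E}, a' e.1 = (P e).1 := fun e => by simp [a', e.2]
      have hb' : ∀ e : {e // e ∈ E}, b' e.1 = (P e).2 := fun e => by simp [b', e.2]
      obtain ⟨C, hC1, hC2, hC3⟩ := konig side a' b' τ (by
        intro e he
        have e1 := ha' ⟨e, hτ he⟩
        have e2 := hb' ⟨e, hτ he⟩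
        simp only at e1 e2
        rw [e1, e2]
        exact hP ⟨e, hτ he⟩)
      have h1 := gval_le hc hw hw0 hr (hcl τ).1
        (Finset.univ.filter fun v : {v // v ∈ VE} => v.1 ∈ C) (by
          intro e he
          rw [hAl] at he
          have := hC2 e.1 he
          rw [ha', hb'] at this
          rcases this with h | h
          · exact Or.inl (Finset.mem_filter.2 ⟨Finset.mem_univ _, h⟩)
          · exact Or.inr (Finset.mem_filter.2 ⟨Finset.mem_univ _, h⟩))
      have h2 : (Finset.univ.filter fun v : {v // v ∈ VE} => v.1 ∈ C).card ≤ C.card := by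
        apply Finset.card_le_card_of_injOn Subtype.val
        · intro v hv
          simpa using hv
        · exact Subtype.val_injective.injOn
      have h3 : ((Finset.univ.filter fun v : {v // v ∈ VE} => v.1 ∈ C).card : ℝ) + 1 ≤ k := by
        have : (Finset.univ.filter fun v : {v // v ∈ VE} => v.1 ∈ C).card + 1 ≤ k := by omega
        exact_mod_cast this
      refine lt_of_le_of_lt h1 (lt_of_le_of_lt ?_ hrk)
      apply mul_le_mul_of_nonneg_left _ (by positivity)
      linarith
  refine hom_abstract F E cl g s (2 * k - 2) ?_ ?_ ?_ ?_ ?_ d hd _ (NM k E) rfl ?_ ?_ ?_ ?_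
  · intro τ hτ e he
    obtain ⟨e', he', rfl⟩ := Finset.mem_image.1 he
    by_contra hne
    apply (Finset.mem_filter.1 he').2
    apply (hcl τ).1.2.1
    rw [hAl]; exact hne
  · intro τ hτ ρ hρ
    exact (hcl τ).2 _ (hmonoF _ _ (hAmono ρ τ hρ) _ (hcl ρ).1)
  · intro τ hτ ρ hρ heq
    refine lp_unique hN (A := A τ) ⟨hmonoF _ _ (hAmono ρ τ hρ) _ (hcl ρ).1, ?_⟩ (hcl τ)
    intro y hy
    exact ((hcl τ).2 y hy).trans (le_of_eq heq.symm)
  · intro τ hτ ρ hρ hs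
    refine lp_unique hN (A := A ρ) (hcl ρ) ⟨⟨(hcl τ).1.1, ?_, (hcl τ).1.2.2⟩, ?_⟩
    · rintro (e | v) hj
      · by_contra hne
        apply hj
        rw [hAl]
        exact hs (Finset.mem_image.2 ⟨e, Finset.mem_filter.2 ⟨Finset.mem_univ _, hne⟩, rfl⟩)
      · exact absurd (hAr ρ v) hj
    · intro y hy
      exact (hcl τ).2 y (hmonoF _ _ (hAmono ρ τ hρ) _ hy)
  · intro τ hτ ρ hρ heq
    have h1 := hcl ρ
    rw [heq] at h1
    have h2 := lp_union hN hG h1 (hcl τ)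
    have h3 : A ρ ∪ A τ = A (ρ ∪ τ) := by
      ext j
      rcases j with e | v
      · rw [Set.mem_union, hAl, hAl, hAl, Finset.mem_union]
      · simp only [Set.mem_union, hAr, true_or]
    rw [h3] at h2
    refine lp_unique hN (hcl _) ?_
    convert h2
  · intro τ hτ
    exact Finset.mem_powerset.1 (Finset.mem_filter.1 hτ).1
  · intro τ hτ ρ hρ
    obtain ⟨h1, h2⟩ := Finset.mem_filter.1 hτ
    exact Finset.mem_filter.2 ⟨Finset.mem_powerset.2 (hρ.trans (Finset.mem_powerset.1 h1)),
      lt_of_le_of_lt (nu_mono hρ) h2⟩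
  · intro τ hτ ρ hρ heq
    obtain ⟨h1, h2⟩ := Finset.mem_filter.1 hτ
    refine Finset.mem_filter.2 ⟨Finset.mem_powerset.2 hρ, ?_⟩
    rw [← hval ρ hρ, heq, hval τ (Finset.mem_powerset.1 h1)]
    exact h2
  · intro τ hτ
    obtain ⟨h1, h2⟩ := Finset.mem_filter.1 hτ
    refine Finset.card_image_le.trans ?_
    exact gsupp_card hN sd hsa hsb hc hw hw0 (hcl τ) k
      ((hval τ (Finset.mem_powerset.1 h1)).2 h2)
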